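/- Let Γ be a connected finite graph in which every vertex has valence at least two, and assume Γ is not homeomorphic to a circle. Then for any two oriented edges e_1, e_2 of Γ, there is an edge-path geodesic c from the terminal point of e_1 to the terminal point of e_2 such that the concatenation ē_2 * c * e_1 is also a geodesic. In particular, for any oriented edge e of Γ there is a geodesic loop c based at the terminal point of e such that ē * c * e is a geodesic. -/

import Mathlib

/-!
Call a dart `f` a successor of `e` when `f` starts where `e` ends and `f ≠ ē`; the claim is that
any dart `ē₂` is reached from any dart `e₁` by a nonempty chain of successors.

Reachability is symmetric (`step_symm`). Since all valences are at least two, the darts ending at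
each vertex admit a fixed-point-free permutation, so there is a permutation `τ` of all darts
preserving terminal vertices and without fixed points. If `f` is a successor of `e`, conjugating
`τ` by a transposition gives `τ e = f̄`. Then `x ↦ bar (τ x)` is a permutation of the finite set of
darts that sends every dart to one of its successors and sends `e` to `f`; running around its cycle
leads from `f` back to `e`.

Since the graph is connected, every reachability class contains a dart ending at any given vertex
(`exists_reach_term`). At a vertex of valence at least three, any two incoming darts have a common
successor (`reach_of_term_eq`), so there is only one class.
-/

/-- A finite multigraph, given by its vertices and its darts (oriented edges), with the
orientation reversal involution `bar` and the terminal vertex map `term`. -/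
structure Multigraph where
  V : Type
  D : Type
  finV : Finite V
  finD : Finite D
  bar : D → D
  bar_bar : ∀ e, bar (bar e) = e
  bar_ne : ∀ e, bar e ≠ e
  term : D → V

namespace Multigraph

/-- Initial vertex of a dart. -/
def init (G : Multigraph) (e : G.D) : G.V := G.term (G.bar e)

/-- Two darts are composable when the second starts where the first ends. -/
def Composable (G : Multigraph) (e f : G.D) : Prop := G.term e = G.init f

/-- An edge path: a list of consecutively composable darts (in traversal order). -/
def IsEdgePath (G : Multigraph) (l : List G.D) : Prop := l.Chain' G.Composable

/-- A reduced (no backtracking) list of darts: such an edge path is exactly a geodesic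
in the metric graph, i.e. a locally distance minimizing edge path. -/
def Reduced (G : Multigraph) (l : List G.D) : Prop := l.Chain' (fun e f => f ≠ G.bar e)

/-- Connectivity of a multigraph. -/
def Connected (G : Multigraph) : Prop :=
  ∀ u w : G.V, u = w ∨ ∃ l : List G.D, G.IsEdgePath l ∧
    (∃ e₀, l.head? = some e₀ ∧ G.init e₀ = u) ∧ (∃ e₁, l.getLast? = some e₁ ∧ G.term e₁ = w)

/-- The valence of a vertex: the number of darts ending at it. -/
noncomputable def valence (G : Multigraph) (v : G.V) : ℕ := Nat.card {e : G.D // G.term e = v}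

end Multigraph

namespace Multigraph

variable {G : Multigraph}

/-- `f` may follow `e` in an edge path without backtracking. -/
def Step (G : Multigraph) (e f : G.D) : Prop := G.Composable e f ∧ f ≠ G.bar e

/-- `f` can be reached from `e` by a (possibly trivial) edge path without backtracking. -/
def Reach (G : Multigraph) : G.D → G.D → Prop := Relation.ReflTransGen G.Step

theorem exists_perm_fixedPointFree {α : Type} (h : 2 ≤ Nat.card α) :
    ∃ σ : Equiv.Perm α, ∀ x, σ x ≠ x := by
  have : Finite α := Nat.finite_of_card_ne_zero (by omega)
  obtain ⟨n, hn⟩ := Nat.exists_eq_add_of_le' h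
  let φ : α ≃ Fin (n + 2) := Finite.equivFinOfCardEq hn
  refine ⟨φ.symm.permCongr (Equiv.addRight (1 : Fin (n + 2))), fun x hx => ?_⟩
  have h1 := congrArg φ hx
  simp [Equiv.permCongr_apply] at h1

theorem exists_perm_term (hval : ∀ v : G.V, 2 ≤ G.valence v) :
    ∃ τ : Equiv.Perm G.D, (∀ x, G.term (τ x) = G.term x) ∧ ∀ x, τ x ≠ x := by
  choose σ hσ using fun v => exists_perm_fixedPointFree (hval v)
  refine ⟨(Equiv.sigmaFiberEquiv G.term).permCongr (Equiv.Perm.sigmaCongrRight σ),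
    fun x => (σ (G.term x) ⟨x, rfl⟩).2, fun x hx => ?_⟩
  exact hσ (G.term x) ⟨x, rfl⟩ (Subtype.ext hx)

/-- A fixed-point-free permutation preserving terminal vertices can be made to send a given dart
to any other dart with the same terminal vertex. -/
theorem exists_perm_term_apply_eq (hval : ∀ v : G.V, 2 ≤ G.valence v) {a b : G.D} (hab : a ≠ b)
    (ht : G.term a = G.term b) :
    ∃ τ : Equiv.Perm G.D, (∀ x, G.term (τ x) = G.term x) ∧ (∀ x, τ x ≠ x) ∧ τ a = b := by
  classical
  obtain ⟨τ, h1, h2⟩ := exists_perm_term hval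
  have hs : ∀ x, G.term (Equiv.swap b (τ a) x) = G.term x := by
    intro x
    rw [Equiv.swap_apply_def]
    split_ifs with hb ha
    · rw [h1, ht, hb]
    · rw [ha, h1, ht]
    · rfl
  refine ⟨Equiv.swap b (τ a) * τ * Equiv.swap b (τ a), fun x => ?_, fun x hx => ?_, ?_⟩
  · simp only [Equiv.Perm.mul_apply, hs, h1]
  · apply h2 (Equiv.swap b (τ a) x)
    have := congrArg (Equiv.swap b (τ a)) hx
    simpa using this
  · simp only [Equiv.Perm.mul_apply]
    rw [Equiv.swap_apply_of_ne_of_ne hab (h2 a).symm, Equiv.swap_apply_right]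

theorem step_symm (hval : ∀ v : G.V, 2 ≤ G.valence v) {e f : G.D} (h : G.Step e f) :
    G.Reach f e := by
  have := G.finD
  have hne : e ≠ G.bar f := fun h' => h.2 (by rw [h', G.bar_bar])
  obtain ⟨τ, h1, h2, h3⟩ := exists_perm_term_apply_eq hval hne h.1
  let π : Equiv.Perm G.D := τ.trans ⟨G.bar, G.bar, G.bar_bar, G.bar_bar⟩
  have hπ : ∀ x, G.Step x (π x) := by
    refine fun x => ⟨?_, fun hx => h2 x ?_⟩
    · change G.term x = G.term (G.bar (G.bar (τ x)))
      rw [G.bar_bar, h1]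
    · have := congrArg G.bar hx
      change G.bar (G.bar (τ x)) = _ at this
      rwa [G.bar_bar, G.bar_bar] at this
  have hreach : ∀ (n : ℕ) (x : G.D), G.Reach x ((π ^ n) x) := by
    intro n
    induction n with
    | zero => exact fun x => .refl
    | succ n ih =>
      intro x
      rw [pow_succ', Equiv.Perm.mul_apply]
      exact (ih x).tail (hπ _)
  have hef : π e = f := by
    change G.bar (τ e) = f
    rw [h3, G.bar_bar]
  obtain ⟨n, hn⟩ := Nat.exists_eq_add_of_le' (orderOf_pos π)
  have hback := hreach n f
  rw [← hef, ← Equiv.Perm.mul_apply, ← pow_succ, ← hn, pow_orderOf_eq_one] at hback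
  rwa [← hef]

theorem Reach.symm (hval : ∀ v : G.V, 2 ≤ G.valence v) {e f : G.D} (h : G.Reach e f) :
    G.Reach f e := by
  induction h with
  | refl => exact .refl
  | tail _ h ih => exact (step_symm hval h).trans ih

theorem exists_term_eq_ne (hval : ∀ v : G.V, 2 ≤ G.valence v) (e : G.D) :
    ∃ g, G.term g = G.term e ∧ g ≠ e := by
  obtain ⟨τ, h1, h2⟩ := exists_perm_term hval
  exact ⟨τ e, h1 e, h2 e⟩

theorem step_bar {e g : G.D} (ht : G.term g = G.term e) (hne : g ≠ e) : G.Step e (G.bar g) := by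
  refine ⟨?_, fun h => hne ?_⟩
  · rw [Composable, init, G.bar_bar, ht]
  · rw [← G.bar_bar g, h, G.bar_bar]

theorem exists_reach_term_of_path (hval : ∀ v : G.V, 2 ≤ G.valence v) (e : G.D) (l : List G.D) :
    ∀ x, G.Reach e x → (G.IsEdgePath l) → (∃ d, l.head? = some d ∧ G.init d = G.term x) →
      ∀ d, l.getLast? = some d → ∃ y, G.Reach e y ∧ G.term y = G.term d := by
  induction l with
  | nil => simp
  | cons a l ih =>
    rintro x hx hl ⟨d, hd, hdx⟩ d' hd'
    obtain rfl : a = d := by simpa using hd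
    have key : ∃ y, G.Reach e y ∧ G.term y = G.term a := by
      by_cases hax : a = G.bar x
      -- The path runs back along `x`: a predecessor of `x` ends at the vertex reached.
      · obtain ⟨g, hg, hne⟩ := exists_term_eq_ne hval a
        refine ⟨g, hx.trans (step_symm hval ?_), hg⟩
        have := step_bar hg.symm hne.symm
        rwa [hax, G.bar_bar] at this
      · exact ⟨a, hx.tail ⟨hdx.symm, hax⟩, rfl⟩
    obtain ⟨y, hy, hya⟩ := key
    cases l with
    | nil =>
      obtain rfl : a = d' := by simpa using hd'
      exact ⟨y, hy, hya⟩
    | cons b l =>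
      rw [IsEdgePath, List.Chain', List.isChain_cons_cons] at hl
      refine ih y hy hl.2 ⟨b, rfl, ?_⟩ d' (by simpa using hd')
      rw [hya]
      exact hl.1.symm

theorem exists_reach_term (hconn : G.Connected) (hval : ∀ v : G.V, 2 ≤ G.valence v)
    (e : G.D) (w : G.V) : ∃ y, G.Reach e y ∧ G.term y = w := by
  rcases hconn (G.term e) w with h | ⟨l, hl, h0, d, hd, rfl⟩
  · exact ⟨e, .refl, h⟩
  · exact exists_reach_term_of_path hval e l e .refl hl h0 d hd

theorem reach_of_term_eq (hval : ∀ v : G.V, 2 ≤ G.valence v) {x y : G.D}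
    (h3 : 3 ≤ G.valence (G.term x)) (hxy : G.term y = G.term x) : G.Reach x y := by
  classical
  have := G.finD
  obtain ⟨g, hg, hgx, hgy⟩ : ∃ g, G.term g = G.term x ∧ g ≠ x ∧ g ≠ y := by
    by_contra! hcon
    have hsub : {g | G.term g = G.term x} ⊆ {x, y} := fun g hg => by
      by_cases hgx : g = x
      · exact Or.inl hgx
      · exact Or.inr (hcon g hg hgx)
    have hle := (Set.ncard_le_ncard hsub (Set.toFinite _)).trans (Set.ncard_insert_le x {y})
    rw [Set.ncard_singleton] at hle
    have : G.valence (G.term x) = {g | G.term g = G.term x}.ncard := rfl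
    omega
  exact .head (step_bar hg hgx) (step_symm hval (step_bar (hg.trans hxy.symm) hgy))

theorem exists_list_of_transGen {a b : G.D} (h : Relation.TransGen G.Step a b) :
    ∃ c : List G.D, ([a] ++ c ++ [b]).IsChain G.Step := by
  induction h using Relation.TransGen.head_induction_on with
  | single h => exact ⟨[], by simpa using h⟩
  | head h _ ih =>
    obtain ⟨c, hc⟩ := ih
    exact ⟨_ :: c, List.isChain_cons_cons.2 ⟨h, hc⟩⟩

end Multigraph

/-- Lemma 3.4. Let `Γ` be a connected finite graph such that the
valence of each vertex is at least two, and assume `Γ` is not (homeomorphic to) a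
circle, i.e. not all valences equal two.  Then for any two oriented edges `e₁`, `e₂`
there is a geodesic `c` from `t(e₁)` to `t(e₂)` such that `ē₂ * c * e₁` is also a
geodesic; that is, the edge path traversing `e₁`, then `c`, then `ē₂` is a reduced
edge path.  (In particular, taking `e₁ = e₂ = e`, for any oriented edge `e` there is a
geodesic loop `c` based at `t(e)` with `ē * c * e` a geodesic.) -/
theorem stmt10 (G : Multigraph) (hconn : G.Connected)
    (hval : ∀ v : G.V, 2 ≤ G.valence v) (hnc : ¬ ∀ v : G.V, G.valence v = 2) :
    ∀ e₁ e₂ : G.D, ∃ c : List G.D,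
      G.IsEdgePath ([e₁] ++ c ++ [G.bar e₂]) ∧ G.Reduced ([e₁] ++ c ++ [G.bar e₂]) := by
  intro e₁ e₂
  obtain ⟨w, hw⟩ := not_forall.1 hnc
  have hw3 : 3 ≤ G.valence w := by have := hval w; omega
  obtain ⟨g, hg, hne⟩ := Multigraph.exists_term_eq_ne hval e₁
  obtain ⟨x, hx, rfl⟩ := Multigraph.exists_reach_term hconn hval (G.bar g) w
  obtain ⟨y, hy, hyx⟩ := Multigraph.exists_reach_term hconn hval (G.bar e₂) (G.term x)
  have hreach : G.Reach (G.bar g) (G.bar e₂) :=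
    hx.trans ((Multigraph.reach_of_term_eq hval hw3 hyx).trans (hy.symm hval))
  obtain ⟨c, hc⟩ := Multigraph.exists_list_of_transGen
    (Relation.TransGen.head' (Multigraph.step_bar hg hne) hreach)
  exact ⟨c, hc.imp fun _ _ h => h.1, hc.imp fun _ _ h => h.2⟩
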